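/- Let K be a field, fix s = (s_1,…,s_m) ∈ ℕ^m and δ ∈ ℤ_{>0}, with the associated α_j, β_j, m̄, expansion-compression matrix E, expanded shift s̄ and matrix Z as in the column partial linearization. Let F ∈ K[x]^{m×n}. Then: (i) cdeg_{s̄}(EF) = cdeg_s(F); (ii) {qE : q ∈ ker(EF)} = ker(F); (iii) if K ∈ K[x]^{k×m} is a basis of ker(F) (so k = m − rank(F)) and K̄ ∈ K[x]^{k×m̄} is any matrix with K = K̄E, then the stacked matrix B = [K̄; Z] ∈ K[x]^{(k+m̄−m)×m̄} is a basis of ker(EF); (iv) if moreover rdeg_{−s}(K) ≥ 0 entrywise and K̄ is the column partial linearization of K, then rdeg_{−s̄}(B) = (rdeg_{−s}(K), 0) (concatenation), and if K is in −s-weak Popov form then B is in −s̄-unordered weak Popov form. -/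

import Mathlib

open Polynomial Matrix

/-- The degree of a polynomial, viewed in `ℤ ∪ {-∞}`. -/
noncomputable def degZ {K : Type*} [Field K] (p : K[X]) : WithBot ℤ :=
  p.degree.map fun a : ℕ => (a : ℤ)

/-- The `s`-row degree of a (row) vector of polynomials. -/
noncomputable def rdegRow {K : Type*} [Field K] {ν : Type*} [Fintype ν]
    (s : ν → ℤ) (v : ν → K[X]) : WithBot ℤ :=
  Finset.univ.sup fun j => degZ (v j) + (s j : WithBot ℤ)

/-- The `s`-row degree of a polynomial matrix. -/
noncomputable def rdeg {K : Type*} [Field K] {ι ν : Type*} [Fintype ν]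
    (s : ν → ℤ) (P : Matrix ι ν K[X]) : ι → WithBot ℤ :=
  fun i => rdegRow s (P i)

/-- The `t`-column degree of a polynomial matrix. -/
noncomputable def cdeg {K : Type*} [Field K] {ι ν : Type*} [Fintype ι]
    (t : ι → ℤ) (P : Matrix ι ν K[X]) : ν → WithBot ℤ :=
  fun j => Finset.univ.sup fun i => degZ (P i j) + (t i : WithBot ℤ)

/-- Coefficient of integer degree `d` of a polynomial (0 if `d < 0`). -/
noncomputable def coeffZ {K : Type*} [Field K] (p : K[X]) (d : ℤ) : K :=
  if 0 ≤ d then p.coeff d.toNat else 0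

/-- The `s`-leading matrix of a polynomial matrix. -/
noncomputable def lm {K : Type*} [Field K] {ι ν : Type*} [Fintype ν]
    (s : ν → ℤ) (P : Matrix ι ν K[X]) : Matrix ι ν K :=
  Matrix.of fun i j =>
    (rdeg s P i).recBotCoe 0 fun t => coeffZ (P i j) (t - s j)

/-- `P` is in `s`-reduced form: its `s`-leading matrix has full row rank,
i.e. its rows are linearly independent over `K`. -/
def IsReducedForm {K : Type*} [Field K] {ι ν : Type*} [Fintype ν]
    (s : ν → ℤ) (P : Matrix ι ν K[X]) : Prop :=
  LinearIndependent K fun i => lm s P i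

open Classical in
/-- The `s`-pivot index of a row vector: the largest column index where the
`s`-row degree is attained (with a nonzero entry); `⊥` for the zero row. -/
noncomputable def piv {K : Type*} [Field K] {ν : Type*} [Fintype ν] [LinearOrder ν]
    (s : ν → ℤ) (v : ν → K[X]) : WithBot ν :=
  (Finset.univ.filter fun j => v j ≠ 0 ∧ degZ (v j) + (s j : WithBot ℤ) = rdegRow s v).max

/-- The `s`-pivot degree of a row vector (junk value `0` for the zero row). -/
noncomputable def pivDeg {K : Type*} [Field K] {ν : Type*} [Fintype ν] [LinearOrder ν]
    (s : ν → ℤ) (v : ν → K[X]) : ℕ :=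
  ((piv s v).map fun j => (v j).natDegree).unbotD 0

/-- `P` is in `s`-weak Popov form: no zero row and strictly increasing `s`-pivot indices. -/
def IsWeakPopov {K : Type*} [Field K] {ι ν : Type*} [Fintype ν] [LinearOrder ν] [Preorder ι]
    (s : ν → ℤ) (P : Matrix ι ν K[X]) : Prop :=
  (∀ i, piv s (P i) ≠ ⊥) ∧ StrictMono fun i => piv s (P i)

/-- `P` is in `s`-unordered weak Popov form: no zero row and pairwise distinct
`s`-pivot indices. -/
def IsUWeakPopov {K : Type*} [Field K] {ι ν : Type*} [Fintype ν] [LinearOrder ν]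
    (s : ν → ℤ) (P : Matrix ι ν K[X]) : Prop :=
  (∀ i, piv s (P i) ≠ ⊥) ∧ Function.Injective fun i => piv s (P i)

/-- `P` is in `s`-Popov form: `s`-weak Popov, monic pivots, and each pivot entry
has degree strictly larger than the other entries of its column. -/
def IsPopov {K : Type*} [Field K] {ι ν : Type*} [Fintype ν] [LinearOrder ν] [Preorder ι]
    (s : ν → ℤ) (P : Matrix ι ν K[X]) : Prop :=
  IsWeakPopov s P ∧
    ∀ i (j : ν), piv s (P i) = (j : WithBot ν) →
      (P i j).Monic ∧ ∀ i', i' ≠ i → (P i' j).degree < (P i j).degree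

/-- The row space of a polynomial matrix. -/
noncomputable def rowSpace {K : Type*} [Field K] {ι ν : Type*} (P : Matrix ι ν K[X]) :
    Submodule K[X] (ν → K[X]) :=
  Submodule.span K[X] (Set.range fun i => P i)

/-- The rows of `B` form a basis of the module `M`. -/
def IsBasisOf {K : Type*} [Field K] {ι ν : Type*} (B : Matrix ι ν K[X])
    (M : Submodule K[X] (ν → K[X])) : Prop :=
  LinearIndependent K[X] (fun i => B i) ∧
    Submodule.span K[X] (Set.range fun i => B i) = M

/-- The left kernel of a polynomial matrix. -/
noncomputable def leftKernel {K : Type*} [Field K] {ι ν : Type*} [Fintype ι]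
    (F : Matrix ι ν K[X]) : Submodule K[X] (ι → K[X]) :=
  LinearMap.ker F.vecMulLinear

/-! ### Column partial linearization (Definition 5.3) -/

/-- Number of parts `α_j = ⌈s_j/δ⌉` (with `α_j = 1` when `s_j = 0`). -/
def cplα (δ : ℕ) {m : ℕ} (s : Fin m → ℕ) (j : Fin m) : ℕ :=
  max 1 ((s j + δ - 1) / δ)

/-- Remainder `β_j` so that `s_j = (α_j − 1)δ + β_j`. -/
def cplβ (δ : ℕ) {m : ℕ} (s : Fin m → ℕ) (j : Fin m) : ℕ :=
  s j - (cplα δ s j - 1) * δ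

/-- Index set of the expanded columns: pairs `(j, i)` with `0 ≤ i < α_j`,
ordered lexicographically (this corresponds to `α_1 + ⋯ + α_{j-1} + i`). -/
abbrev CplIdx (δ : ℕ) {m : ℕ} (s : Fin m → ℕ) := Lex ((j : Fin m) × Fin (cplα δ s j))

/-- The expansion-compression matrix `E`: block diagonal with `j`-th block the
column `(1, x^δ, …, x^{(α_j−1)δ})ᵀ`. -/
noncomputable def cplE (K : Type*) [Field K] (δ : ℕ) {m : ℕ} (s : Fin m → ℕ) :
    Matrix (CplIdx δ s) (Fin m) K[X] :=
  Matrix.of fun c j =>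
    if (ofLex c).1 = j then (Polynomial.X : K[X]) ^ (((ofLex c).2 : ℕ) * δ) else 0

/-- The expanded shift `s̄`: within block `j`, `δ` everywhere except `β_j` at
the last position. -/
def cplShift (δ : ℕ) {m : ℕ} (s : Fin m → ℕ) (c : CplIdx δ s) : ℕ :=
  if ((ofLex c).2 : ℕ) = cplα δ s (ofLex c).1 - 1 then cplβ δ s (ofLex c).1 else δ

/-- The block diagonal matrix `Z = diag(Z_1,…,Z_m)` with
`Z_j ∈ K[x]^{(α_j−1)×α_j}` having `x^δ` on the diagonal and `−1` on the
superdiagonal. -/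
noncomputable def cplZ (K : Type*) [Field K] (δ : ℕ) {m : ℕ} (s : Fin m → ℕ) :
    Matrix (Lex ((j : Fin m) × Fin (cplα δ s j - 1))) (CplIdx δ s) K[X] :=
  Matrix.of fun r c =>
    if (ofLex r).1 = (ofLex c).1 then
      (if ((ofLex c).2 : ℕ) = ((ofLex r).2 : ℕ) then (Polynomial.X : K[X]) ^ δ
       else if ((ofLex c).2 : ℕ) = ((ofLex r).2 : ℕ) + 1 then -1 else 0)
    else 0

/-!
Selecting the first column of each block gives a matrix `S` with `S E = 1`, and the rows of
`1 - E S` are telescoping combinations of rows of `Z`. As `Z E = 0`, and `Z` is triangular with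
diagonal `x^δ` on suitable columns, the rows of `Z` form a basis of the left kernel of `E`. Since
`ker(EF)` is the preimage of `ker F` under the surjection `q ↦ qE`, the lifts of a basis
of `ker F` together with a basis of `ker E` form a basis of `ker(EF)`.

For the degrees, a column that is not the last of its block is shifted by `-δ` while its entry in
`K̄` has degree less than `δ`, so a row degree that is nonnegative is attained in last columns only,
where the shifted degrees of `K̄` and of `K = K̄E` agree. Each row of `Z` attains its shifted degree
`0` only at its entry `x^δ`, which never lies in a last column.
-/

section ShiftedDegree

variable {K ι μ ν : Type*} [Field K]

theorem degZ_zero : degZ (0 : K[X]) = ⊥ := by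
  simp [degZ]

theorem degZ_of_ne_zero {p : K[X]} (hp : p ≠ 0) : degZ p = ((p.natDegree : ℤ) : WithBot ℤ) := by
  rw [degZ, degree_eq_natDegree hp]
  rfl

theorem degZ_mul (p q : K[X]) : degZ (p * q) = degZ p + degZ q := by
  rw [degZ, degree_mul]
  exact WithBot.map_add (Nat.castAddMonoidHom ℤ) _ _

theorem degZ_X_pow (k : ℕ) : degZ (X ^ k : K[X]) = ((k : ℤ) : WithBot ℤ) := by
  rw [degZ, degree_X_pow]
  rfl

theorem degZ_add_eq_left_of_degree_lt {p q : K[X]} (h : q.degree < p.degree) :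
    degZ (p + q) = degZ p := by
  rw [degZ, degZ, degree_add_eq_left_of_degree_lt h]

/-- The degree of the `j`-th entry of the row `v`, raised by the shift `s j`. The `s`-row degree
of `v` is the maximum of these, and the `s`-pivot is the last place where it is attained. -/
noncomputable def shiftedDeg (s : ν → ℤ) (v : ν → K[X]) (j : ν) : WithBot ℤ :=
  degZ (v j) + (s j : WithBot ℤ)

theorem shiftedDeg_of_eq_zero {s : ν → ℤ} {v : ν → K[X]} {j : ν} (h : v j = 0) :
    shiftedDeg s v j = ⊥ := by
  rw [shiftedDeg, h, degZ_zero, WithBot.bot_add]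

theorem shiftedDeg_neg_natCast_lt_zero_iff {t : ν → ℕ} {v : ν → K[X]} {j : ν} :
    shiftedDeg (fun c => -(t c : ℤ)) v j < 0 ↔ (v j).degree < t j := by
  by_cases h : v j = 0
  · simp [shiftedDeg_of_eq_zero h, h]
  · rw [shiftedDeg, degZ_of_ne_zero h, degree_eq_natDegree h, ← WithBot.coe_add,
      ← WithBot.coe_zero, WithBot.coe_lt_coe, Nat.cast_lt]
    omega

variable [Fintype μ] [Fintype ν]

theorem shiftedDeg_le_rdegRow (s : ν → ℤ) (v : ν → K[X]) (j : ν) :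
    shiftedDeg s v j ≤ rdegRow s v :=
  Finset.le_sup (f := shiftedDeg s v) (Finset.mem_univ j)

theorem rdegRow_le_iff {s : ν → ℤ} {v : ν → K[X]} {d : WithBot ℤ} :
    rdegRow s v ≤ d ↔ ∀ j, shiftedDeg s v j ≤ d := by
  simp [rdegRow, shiftedDeg]

theorem piv_eq_coe_iff [LinearOrder ν] {s : ν → ℤ} {v : ν → K[X]} (h : ⊥ < rdegRow s v) {j : ν} :
    piv s v = j ↔ IsGreatest {i | shiftedDeg s v i = rdegRow s v} j := by
  classical
  have mem_pivots (i : ν) : (v i ≠ 0 ∧ degZ (v i) + (s i : WithBot ℤ) = rdegRow s v) ↔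
      shiftedDeg s v i = rdegRow s v :=
    and_iff_right_of_imp fun hi h0 => h.ne' (hi.symm.trans (shiftedDeg_of_eq_zero h0))
  simp only [piv, mem_pivots]
  refine ⟨fun hj => ⟨by simpa using Finset.mem_of_max hj, fun i hi => ?_⟩, fun hj => ?_⟩
  · exact Finset.le_max_of_eq (by simpa using hi) hj
  · refine le_antisymm (Finset.max_le fun i hi => ?_) (Finset.le_max (by simpa using hj.1))
    exact WithBot.coe_le_coe.2 (hj.2 (by simpa using hi))

theorem rdegRow_eq_of_forall_ne_lt {s : ν → ℤ} {v : ν → K[X]} {j : ν}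
    (h : ∀ i ≠ j, shiftedDeg s v i < shiftedDeg s v j) : rdegRow s v = shiftedDeg s v j := by
  refine le_antisymm (rdegRow_le_iff.2 fun i => ?_) (shiftedDeg_le_rdegRow s v j)
  rcases eq_or_ne i j with rfl | hij
  exacts [le_rfl, (h i hij).le]

theorem piv_eq_of_forall_ne_lt [LinearOrder ν] {s : ν → ℤ} {v : ν → K[X]} {j : ν}
    (hj : ⊥ < shiftedDeg s v j) (h : ∀ i ≠ j, shiftedDeg s v i < shiftedDeg s v j) :
    piv s v = j := by
  have hr := rdegRow_eq_of_forall_ne_lt h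
  refine (piv_eq_coe_iff (hr ▸ hj)).2 ⟨hr.symm, fun i hi => ?_⟩
  by_contra hij
  exact (h i (not_le.1 hij).ne').ne (hi.trans hr)

section Transport

variable {s : μ → ℤ} {t : ν → ℤ} {p : μ → K[X]} {v : ν → K[X]} {e : μ → ν} {b : WithBot ℤ}

/- Entries of shifted degree below `b` influence neither the row degree nor the pivot of a row
whose row degree is at least `b`, so the two rows only have to match above `b`. -/
theorem rdegRow_eq_of_shiftedDeg_eq (hb : ⊥ < b) (hp : b ≤ rdegRow s p)
    (hpv : ∀ j, b ≤ shiftedDeg s p j → shiftedDeg t v (e j) = shiftedDeg s p j)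
    (hvp : ∀ c, b ≤ shiftedDeg t v c → ∃ j, e j = c ∧ shiftedDeg s p j = shiftedDeg t v c) :
    rdegRow t v = rdegRow s p := by
  apply le_antisymm
  · refine rdegRow_le_iff.2 fun c => ?_
    rcases le_total b (shiftedDeg t v c) with hc | hc
    · obtain ⟨j, -, hj⟩ := hvp c hc
      exact hj ▸ shiftedDeg_le_rdegRow s p j
    · exact hc.trans hp
  · obtain ⟨j, -, hj⟩ := (Finset.le_sup_iff (f := shiftedDeg s p) (hb.trans_le hp)).1 le_rfl
    change rdegRow s p ≤ shiftedDeg s p j at hj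
    exact hj.trans (hpv j (hp.trans hj) ▸ shiftedDeg_le_rdegRow t v (e j))

theorem piv_eq_of_shiftedDeg_eq [LinearOrder μ] [LinearOrder ν] (he : Monotone e) (hb : ⊥ < b)
    (hp : b ≤ rdegRow s p)
    (hpv : ∀ j, b ≤ shiftedDeg s p j → shiftedDeg t v (e j) = shiftedDeg s p j)
    (hvp : ∀ c, b ≤ shiftedDeg t v c → ∃ j, e j = c ∧ shiftedDeg s p j = shiftedDeg t v c)
    {j : μ} (hj : piv s p = j) : piv t v = e j := by
  have hr := rdegRow_eq_of_shiftedDeg_eq hb hp hpv hvp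
  have pivots_eq : {c | shiftedDeg t v c = rdegRow t v} =
      e '' {i | shiftedDeg s p i = rdegRow s p} := by
    ext c
    constructor
    · intro hc
      obtain ⟨i, rfl, hi⟩ := hvp c (hp.trans_eq (hc.trans hr).symm)
      exact ⟨i, hi.trans (hc.trans hr), rfl⟩
    · rintro ⟨i, hi, rfl⟩
      exact (hpv i (hp.trans_eq hi.symm)).trans (hi.trans hr.symm)
  rw [piv_eq_coe_iff (hr ▸ hb.trans_le hp), pivots_eq]
  exact he.map_isGreatest ((piv_eq_coe_iff (hb.trans_le hp)).1 hj)

end Transport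

theorem IsWeakPopov.isUWeakPopov [LinearOrder ν] [LinearOrder ι] {s : ν → ℤ}
    {P : Matrix ι ν K[X]} (h : IsWeakPopov s P) : IsUWeakPopov s P :=
  ⟨h.1, h.2.injective⟩

theorem IsUWeakPopov.fromRows [LinearOrder ν] {κ : Type*} {s : ν → ℤ} {P : Matrix ι ν K[X]}
    {Q : Matrix κ ν K[X]} (hP : IsUWeakPopov s P) (hQ : IsUWeakPopov s Q)
    (hPQ : ∀ i r, piv s (P i) ≠ piv s (Q r)) : IsUWeakPopov s (fromRows P Q) := by
  refine ⟨Sum.rec hP.1 hQ.1, ?_⟩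
  convert hP.2.sumElim hQ.2 hPQ using 1
  ext (i | r) <;> rfl

end ShiftedDegree

section StackedBasis

section Module

variable {R M N ι κ : Type*} [Ring R] [AddCommGroup M] [AddCommGroup N] [Module R M] [Module R N]
  {f : M →ₗ[R] N} {v : ι → M} {w : κ → M}

theorem linearIndependent_sumElim_of_comp (hv : LinearIndependent R (f ∘ v))
    (hw : LinearIndependent R w) (hwf : ∀ r, f (w r) = 0) :
    LinearIndependent R (Sum.elim v w) :=
  (hv.of_comp f).sum_type hw <| (Submodule.range_ker_disjoint hv).mono_right <|
    Submodule.span_le.2 <| Set.range_subset_iff.2 hwf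

theorem span_range_sumElim_of_span_eq_ker
    (hw : Submodule.span R (Set.range w) = LinearMap.ker f) :
    Submodule.span R (Set.range (Sum.elim v w)) =
      (Submodule.span R (Set.range (f ∘ v))).comap f := by
  rw [Set.Sum.elim_range, Submodule.span_union, hw, Set.range_comp, ← Submodule.map_span,
    Submodule.comap_map_eq]

end Module

variable {K ι κ μ ν ξ : Type*} [Field K] [Fintype μ]

theorem IsBasisOf.fromRows {E : Matrix μ ν K[X]} {P : Matrix ι μ K[X]} {Z : Matrix κ μ K[X]}
    {M : Submodule K[X] (ν → K[X])} (hP : IsBasisOf (P * E) M)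
    (hZ : IsBasisOf Z (leftKernel E)) :
    IsBasisOf (fromRows P Z) (M.comap E.vecMulLinear) := by
  have hPE : LinearIndependent K[X] (E.vecMulLinear ∘ P) := hP.1
  have hPM : Submodule.span K[X] (Set.range (E.vecMulLinear ∘ P)) = M := hP.2
  have hZE (r : κ) : E.vecMulLinear (Z r) = 0 :=
    LinearMap.mem_ker.1 (hZ.2.le (Submodule.subset_span (Set.mem_range_self r)))
  exact ⟨linearIndependent_sumElim_of_comp hPE hZ.1 hZE,
    (span_range_sumElim_of_span_eq_ker hZ.2).trans (by rw [hPM])⟩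

theorem leftKernel_mul [Fintype ν] (E : Matrix μ ν K[X]) (F : Matrix ν ξ K[X]) :
    leftKernel (E * F) = (leftKernel F).comap E.vecMulLinear := by
  ext q
  simp [leftKernel, vecMul_vecMul]

end StackedBasis

section PartialLinearization

variable {K κ : Type*} [Field K] {m : ℕ} (δ : ℕ) (s : Fin m → ℕ)

theorem cplα_pos (j : Fin m) : 0 < cplα δ s j :=
  one_pos.trans_le (le_max_left 1 ((s j + δ - 1) / δ))

theorem cplα_sub_one_mul_add_cplβ (j : Fin m) : (cplα δ s j - 1) * δ + cplβ δ s j = s j := by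
  refine Nat.add_sub_of_le ?_
  have hq := Nat.div_mul_le_self (s j + δ - 1) δ
  rcases max_choice 1 ((s j + δ - 1) / δ) with h | h <;> rw [cplα, h]
  · simp
  · rw [Nat.sub_one_mul]
    omega

variable {δ s} in
theorem cplβ_pos (hδ : 0 < δ) {j : Fin m} (hα : 1 < cplα δ s j) : 0 < cplβ δ s j := by
  have hq := Nat.div_mul_le_self (s j + δ - 1) δ
  have hαq : cplα δ s j = (s j + δ - 1) / δ :=
    max_eq_right_of_lt ((lt_max_iff.1 hα).resolve_left (lt_irrefl 1))
  have hαδ : 1 * δ < cplα δ s j * δ := Nat.mul_lt_mul_of_pos_right hα hδ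
  rw [cplβ, Nat.sub_one_mul]
  rw [← hαq] at hq
  omega

/-- The indices of the rows of `Z`: pairs `(j, i)` with `0 ≤ i < α_j - 1`. -/
abbrev CplRowIdx : Type := Lex ((j : Fin m) × Fin (cplα δ s j - 1))

/-- The column holding the entry `x^δ` of row `r` of `Z`. As `r` varies, these are all the columns
that are not the last of their block. -/
def cplDiagCol (r : CplRowIdx δ s) : CplIdx δ s :=
  toLex ⟨(ofLex r).1, ⟨(ofLex r).2, (ofLex r).2.2.trans_le (Nat.sub_le _ _)⟩⟩

/-- The column holding the entry `-1` of row `r` of `Z`. -/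
def cplSuperCol (r : CplRowIdx δ s) : CplIdx δ s :=
  toLex ⟨(ofLex r).1, ⟨(ofLex r).2 + 1, Nat.add_lt_of_lt_sub (ofLex r).2.2⟩⟩

/-- The first column of block `j`. -/
def cplFirst (j : Fin m) : CplIdx δ s :=
  toLex ⟨j, ⟨0, cplα_pos δ s j⟩⟩

/-- The last column of block `j`. -/
def cplLast (j : Fin m) : CplIdx δ s :=
  toLex ⟨j, ⟨cplα δ s j - 1, Nat.sub_one_lt_of_lt (cplα_pos δ s j)⟩⟩

theorem cplLast_strictMono : StrictMono (cplLast δ s) :=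
  fun _ _ h => Sigma.Lex.left _ _ h

theorem cplDiagCol_strictMono : StrictMono (cplDiagCol δ s) := by
  rintro _ _ (⟨_, _, h⟩ | ⟨_, _, h⟩)
  exacts [Sigma.Lex.left _ _ h, Sigma.Lex.right _ _ h]

variable {δ s}

theorem cplDiagCol_lt_cplSuperCol (r : CplRowIdx δ s) : cplDiagCol δ s r < cplSuperCol δ s r :=
  Sigma.Lex.right _ _ (Nat.lt_succ_self _)

theorem cplDiagCol_ne_cplLast (r : CplRowIdx δ s) (j : Fin m) :
    cplDiagCol δ s r ≠ cplLast δ s j := by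
  intro h
  obtain rfl : (ofLex r).1 = j := congrArg (fun c => (ofLex c).1) h
  have hlast : ((ofLex r).2 : ℕ) = cplα δ s (ofLex r).1 - 1 :=
    congrArg (fun c => ((ofLex c).2 : ℕ)) h
  exact (ofLex r).2.2.ne hlast

theorem exists_eq_cplLast_or_cplDiagCol (c : CplIdx δ s) :
    (∃ j, c = cplLast δ s j) ∨ ∃ r, c = cplDiagCol δ s r := by
  obtain ⟨⟨j, a, ha⟩, rfl⟩ := toLex.surjective c
  rcases (Nat.le_sub_one_of_lt ha).eq_or_lt with rfl | h
  exacts [.inl ⟨j, rfl⟩, .inr ⟨toLex ⟨j, a, h⟩, rfl⟩]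

theorem cplShift_cplLast (j : Fin m) : cplShift δ s (cplLast δ s j) = cplβ δ s j :=
  if_pos rfl

theorem cplShift_cplDiagCol (r : CplRowIdx δ s) : cplShift δ s (cplDiagCol δ s r) = δ :=
  if_neg (ofLex r).2.2.ne

theorem cplShift_cplSuperCol_pos (hδ : 0 < δ) (r : CplRowIdx δ s) :
    0 < cplShift δ s (cplSuperCol δ s r) := by
  rcases exists_eq_cplLast_or_cplDiagCol (cplSuperCol δ s r) with ⟨j, h⟩ | ⟨r', h⟩
  · obtain rfl : (ofLex r).1 = j := congrArg (fun c => (ofLex c).1) h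
    have hr := (ofLex r).2.2
    rw [h, cplShift_cplLast]
    exact cplβ_pos hδ (by omega)
  · rwa [h, cplShift_cplDiagCol]

theorem mul_add_cplShift_cplLast (j : Fin m) :
    (cplα δ s j - 1) * δ + cplShift δ s (cplLast δ s j) = s j := by
  rw [cplShift_cplLast, cplα_sub_one_mul_add_cplβ]

theorem mul_add_cplShift_le (c : CplIdx δ s) :
    ((ofLex c).2 : ℕ) * δ + cplShift δ s c ≤ s (ofLex c).1 := by
  rcases exists_eq_cplLast_or_cplDiagCol c with ⟨j, rfl⟩ | ⟨r, rfl⟩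
  · exact (mul_add_cplShift_cplLast j).le
  · calc ((ofLex r).2 : ℕ) * δ + cplShift δ s (cplDiagCol δ s r)
      _ = ((ofLex r).2 + 1) * δ := by rw [cplShift_cplDiagCol, Nat.succ_mul]
      _ ≤ (cplα δ s (ofLex r).1 - 1) * δ := Nat.mul_le_mul_right δ (ofLex r).2.2
      _ ≤ s (ofLex r).1 := Nat.le.intro (cplα_sub_one_mul_add_cplβ δ s _)

theorem cplE_row (c : CplIdx δ s) :
    cplE K δ s c = Pi.single (ofLex c).1 (X ^ (((ofLex c).2 : ℕ) * δ)) := by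
  ext1 j
  simp only [cplE, of_apply, Pi.single_apply, eq_comm]

theorem cplE_apply_self (c : CplIdx δ s) :
    cplE K δ s c (ofLex c).1 = X ^ (((ofLex c).2 : ℕ) * δ) :=
  if_pos rfl

theorem single_one_vecMul_cplE (c : CplIdx δ s) :
    Pi.single c 1 ᵥ* cplE K δ s = Pi.single (ofLex c).1 (X ^ (((ofLex c).2 : ℕ) * δ)) :=
  (single_one_vecMul c (cplE K δ s)).trans (cplE_row c)

theorem cplE_mul_row (F : Matrix (Fin m) κ K[X]) (c : CplIdx δ s) :
    (cplE K δ s * F) c = (X ^ (((ofLex c).2 : ℕ) * δ) : K[X]) • F (ofLex c).1 := by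
  change cplE K δ s c ᵥ* F = _
  rw [cplE_row, single_vecMul]
  rfl

theorem cdeg_cplE_mul (F : Matrix (Fin m) κ K[X]) :
    cdeg (fun c => (cplShift δ s c : ℤ)) (cplE K δ s * F) = cdeg (fun i => (s i : ℤ)) F := by
  ext1 j
  have shifted_entry (c : CplIdx δ s) :
      degZ ((cplE K δ s * F) c j) + ((cplShift δ s c : ℤ) : WithBot ℤ) =
        degZ (F (ofLex c).1 j) + ((((ofLex c).2 * δ + cplShift δ s c : ℕ) : ℤ) : WithBot ℤ) := by
    rw [cplE_mul_row, Pi.smul_apply, smul_eq_mul, degZ_mul, degZ_X_pow, Nat.cast_add,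
      WithBot.coe_add, add_comm (WithBot.some _) (degZ _), add_assoc]
  refine le_antisymm (Finset.sup_le fun c _ => ?_) (Finset.sup_le fun i _ => ?_)
  · refine le_trans ?_ (Finset.le_sup (Finset.mem_univ (ofLex c).1))
    rw [shifted_entry]
    exact add_le_add_right (WithBot.coe_le_coe.2 (Nat.cast_le.2 (mul_add_cplShift_le c))) _
  · refine le_trans (le_of_eq ?_) (Finset.le_sup (Finset.mem_univ (cplLast δ s i)))
    rw [shifted_entry]
    exact congrArg (fun d : ℕ => degZ (F i j) + ((d : ℤ) : WithBot ℤ))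
      (mul_add_cplShift_cplLast i).symm

variable (K δ s) in
/-- The left inverse of `E` that selects the first column of each block. -/
noncomputable def cplSection : Matrix (Fin m) (CplIdx δ s) K[X] :=
  of fun j => Pi.single (cplFirst δ s j) 1

theorem cplSection_mul_cplE : cplSection K δ s * cplE K δ s = 1 := by
  refine funext fun j => ?_
  change Pi.single (cplFirst δ s j) 1 ᵥ* cplE K δ s = _
  rw [single_one_vecMul_cplE]
  ext1 i
  simp [cplFirst, one_apply, Pi.single_apply, eq_comm]

theorem vecMulLinear_cplE_surjective : Function.Surjective (cplE K δ s).vecMulLinear := fun p =>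
  ⟨p ᵥ* cplSection K δ s, by
    rw [vecMulLinear_apply, vecMul_vecMul, cplSection_mul_cplE, vecMul_one]⟩

theorem cplZ_row (r : CplRowIdx δ s) :
    cplZ K δ s r = (X ^ δ : K[X]) • Pi.single (cplDiagCol δ s r) 1 -
      Pi.single (cplSuperCol δ s r) 1 := by
  obtain ⟨⟨j, a⟩, rfl⟩ := toLex.surjective r
  ext1 c
  obtain ⟨⟨j', b⟩, rfl⟩ := toLex.surjective c
  by_cases hj : j = j'
  · subst hj
    by_cases ha : (b : ℕ) = a <;> by_cases ha' : (b : ℕ) = a + 1 <;>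
      simp [cplZ, cplDiagCol, cplSuperCol, Pi.single_apply, Fin.ext_iff, ha, ha']
  · simp [cplZ, cplDiagCol, cplSuperCol, hj, Ne.symm hj]

theorem cplZ_mul_cplE : cplZ K δ s * cplE K δ s = 0 := by
  refine funext fun r => ?_
  change cplZ K δ s r ᵥ* cplE K δ s = 0
  rw [cplZ_row, sub_vecMul, smul_vecMul, single_one_vecMul_cplE, single_one_vecMul_cplE,
    ← Pi.single_smul, sub_eq_zero, smul_eq_mul, ← pow_add]
  simp [cplDiagCol, cplSuperCol, add_mul, add_comm]

theorem linearIndependent_cplZ : LinearIndependent K[X] (fun r => cplZ K δ s r) := by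
  let D : Matrix (CplRowIdx δ s) (CplRowIdx δ s) K[X] :=
    (cplZ K δ s).submatrix id (cplDiagCol δ s)
  have D_apply (r r' : CplRowIdx δ s) : D r r' =
      (X ^ δ : K[X]) * Pi.single (M := fun _ => K[X]) (cplDiagCol δ s r) 1 (cplDiagCol δ s r') -
        Pi.single (M := fun _ => K[X]) (cplSuperCol δ s r) 1 (cplDiagCol δ s r') :=
    congrFun (cplZ_row r) _
  have D_diag (r : CplRowIdx δ s) : D r r = X ^ δ := by
    simp [D_apply, Pi.single_eq_of_ne (cplDiagCol_lt_cplSuperCol r).ne]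
  have D_upper : D.BlockTriangular id := fun r r' hr => by
    have hlt : cplDiagCol δ s r' < cplDiagCol δ s r := cplDiagCol_strictMono δ s hr
    rw [D_apply, Pi.single_eq_of_ne hlt.ne,
      Pi.single_eq_of_ne (hlt.trans (cplDiagCol_lt_cplSuperCol r)).ne, mul_zero, sub_zero]
  have D_det : D.det ≠ 0 := by
    simp [det_of_isUpperTriangular D_upper, D_diag]
  exact LinearIndependent.of_comp (LinearMap.funLeft K[X] K[X] (cplDiagCol δ s))
    (linearIndependent_rows_of_det_ne_zero D_det)

theorem one_sub_cplE_mul_cplSection_row (c : CplIdx δ s) :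
    (1 - cplE K δ s * cplSection K δ s : Matrix _ _ K[X]) c = Pi.single c 1 -
      (X ^ (((ofLex c).2 : ℕ) * δ) : K[X]) • Pi.single (cplFirst δ s (ofLex c).1) 1 := by
  have h1 : (1 : Matrix (CplIdx δ s) (CplIdx δ s) K[X]) c = Pi.single c 1 := by
    ext1 c'
    simp [one_apply, Pi.single_apply, eq_comm]
  exact congrArg₂ (· - ·) h1 (cplE_mul_row (cplSection K δ s) c)

theorem one_sub_cplE_mul_cplSection_mem_span_cplZ (c : CplIdx δ s) :
    (1 - cplE K δ s * cplSection K δ s : Matrix _ _ K[X]) c ∈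
      Submodule.span K[X] (Set.range fun r => cplZ K δ s r) := by
  set S := Submodule.span K[X] (Set.range fun r => cplZ K δ s r)
  obtain ⟨⟨j, a, ha⟩, rfl⟩ := toLex.surjective c
  rw [one_sub_cplE_mul_cplSection_row]
  induction a with
  | zero => simp [cplFirst]
  | succ a ih =>
    let r : CplRowIdx δ s := toLex ⟨j, a, Nat.lt_sub_of_add_lt ha⟩
    have hZr : cplZ K δ s r ∈ S := Submodule.subset_span (Set.mem_range_self r)
    convert S.sub_mem (S.smul_mem (X ^ δ) (ih (Nat.lt_of_succ_lt ha))) hZr using 1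
    rw [cplZ_row]
    simp [smul_sub, smul_smul, ← pow_add, r, cplDiagCol, cplSuperCol, Nat.succ_mul, add_comm]

theorem isBasisOf_cplZ : IsBasisOf (cplZ K δ s) (leftKernel (cplE K δ s)) := by
  refine ⟨linearIndependent_cplZ, le_antisymm ?_ fun q hq => ?_⟩
  · exact Submodule.span_le.2 (Set.range_subset_iff.2 fun r => congrFun cplZ_mul_cplE r)
  · have hqE : q ᵥ* cplE K δ s = 0 := hq
    have hq_eq : q = q ᵥ* (1 - cplE K δ s * cplSection K δ s) := by
      rw [vecMul_sub, vecMul_one, ← vecMul_vecMul, hqE, zero_vecMul, sub_zero]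
    rw [hq_eq, vecMul_eq_sum]
    exact Submodule.sum_mem _ fun c _ =>
      Submodule.smul_mem _ _ (one_sub_cplE_mul_cplSection_mem_span_cplZ c)

/-- The row `v` is the column partial linearization of the row `v E`: outside the last column of
each block, its entries have degree less than `δ`. -/
def IsCplRow (δ : ℕ) (s : Fin m → ℕ) (v : CplIdx δ s → K[X]) : Prop :=
  ∀ c : CplIdx δ s, ¬(((ofLex c).2 : ℕ) = cplα δ s (ofLex c).1 - 1) → (v c).degree < δ

section IsCplRow

variable {v : CplIdx δ s → K[X]}

theorem IsCplRow.degree_cplDiagCol_lt (hv : IsCplRow δ s v) (r : CplRowIdx δ s) :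
    (v (cplDiagCol δ s r)).degree < δ :=
  hv _ (ofLex r).2.2.ne

theorem IsCplRow.degree_mul_cplE_lt (hv : IsCplRow δ s v) {c : CplIdx δ s} {j : Fin m}
    (hc : c ≠ cplLast δ s j) :
    (v c * cplE K δ s c j).degree < ((cplα δ s j - 1) * δ : ℕ) := by
  by_cases hcj : (ofLex c).1 = j
  · rcases exists_eq_cplLast_or_cplDiagCol c with ⟨i, rfl⟩ | ⟨r, rfl⟩
    · exact absurd (congrArg (cplLast δ s) hcj) hc
    · subst hcj
      have hE : (cplE K δ s (cplDiagCol δ s r) (ofLex r).1).degree =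
          (((ofLex r).2 : ℕ) * δ : ℕ) :=
        (congrArg degree (cplE_apply_self (cplDiagCol δ s r))).trans (degree_X_pow _)
      have hr : δ + ((ofLex r).2 : ℕ) * δ ≤ (cplα δ s (ofLex r).1 - 1) * δ := by
        rw [add_comm, ← Nat.succ_mul]
        exact Nat.mul_le_mul_right δ (ofLex r).2.2
      calc (v (cplDiagCol δ s r) * cplE K δ s (cplDiagCol δ s r) (ofLex r).1).degree
        _ = (v (cplDiagCol δ s r)).degree + (((ofLex r).2 : ℕ) * δ : ℕ) := by
          rw [degree_mul, hE]
        _ < δ + (((ofLex r).2 : ℕ) * δ : ℕ) :=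
          WithBot.add_lt_add_right WithBot.coe_ne_bot (hv.degree_cplDiagCol_lt r)
        _ ≤ ((cplα δ s (ofLex r).1 - 1) * δ : ℕ) := WithBot.coe_le_coe.2 hr
  · rw [cplE_row, Pi.single_eq_of_ne' hcj, mul_zero, degree_zero]
    exact WithBot.bot_lt_coe _

theorem IsCplRow.exists_vecMul_cplE_eq_add (hv : IsCplRow δ s v) (j : Fin m) :
    ∃ low : K[X], low.degree < ((cplα δ s j - 1) * δ : ℕ) ∧
      (v ᵥ* cplE K δ s) j = v (cplLast δ s j) * X ^ ((cplα δ s j - 1) * δ) + low := by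
  refine ⟨∑ c ∈ Finset.univ.erase (cplLast δ s j), v c * cplE K δ s c j, ?_, ?_⟩
  · refine (degree_sum_le _ _).trans_lt ((Finset.sup_lt_iff (WithBot.bot_lt_coe _)).2 ?_)
    exact fun c hc => hv.degree_mul_cplE_lt (Finset.ne_of_mem_erase hc)
  · have hE : cplE K δ s (cplLast δ s j) j = X ^ ((cplα δ s j - 1) * δ) :=
      cplE_apply_self _
    rw [← hE]
    exact (Finset.add_sum_erase _ _ (Finset.mem_univ (cplLast δ s j))).symm

theorem IsCplRow.shiftedDeg_cplDiagCol_lt_zero (hv : IsCplRow δ s v) (r : CplRowIdx δ s) :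
    shiftedDeg (fun c => -(cplShift δ s c : ℤ)) v (cplDiagCol δ s r) < 0 := by
  rw [shiftedDeg_neg_natCast_lt_zero_iff, cplShift_cplDiagCol]
  exact hv.degree_cplDiagCol_lt r

theorem IsCplRow.shiftedDeg_cplLast (hv : IsCplRow δ s v) {j : Fin m}
    (hj : v (cplLast δ s j) ≠ 0) :
    shiftedDeg (fun c => -(cplShift δ s c : ℤ)) v (cplLast δ s j) =
      shiftedDeg (fun j => -(s j : ℤ)) (v ᵥ* cplE K δ s) j := by
  obtain ⟨low, hlow, hvE⟩ := hv.exists_vecMul_cplE_eq_add j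
  have hlow_lt : low.degree < (v (cplLast δ s j) * X ^ ((cplα δ s j - 1) * δ)).degree := by
    rw [degree_mul, degree_X_pow]
    refine hlow.trans_le (le_add_of_nonneg_left ?_)
    exact zero_le_degree_iff.2 hj
  have hshift : (((cplα δ s j - 1) * δ : ℕ) : ℤ) + -(s j : ℤ) =
      -(cplShift δ s (cplLast δ s j) : ℤ) := by
    have := mul_add_cplShift_cplLast (δ := δ) (s := s) j
    omega
  rw [shiftedDeg, shiftedDeg, hvE, degZ_add_eq_left_of_degree_lt hlow_lt, degZ_mul, degZ_X_pow,
    add_assoc, ← WithBot.coe_add, hshift]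

theorem IsCplRow.cplLast_ne_zero (hv : IsCplRow δ s v) {j : Fin m}
    (hj : 0 ≤ shiftedDeg (fun j => -(s j : ℤ)) (v ᵥ* cplE K δ s) j) :
    v (cplLast δ s j) ≠ 0 := by
  obtain ⟨low, hlow, hvE⟩ := hv.exists_vecMul_cplE_eq_add j
  contrapose! hj
  rw [shiftedDeg_neg_natCast_lt_zero_iff, hvE, hj, zero_mul, zero_add]
  refine hlow.trans_le (Nat.cast_le.2 ?_)
  exact Nat.le.intro (cplα_sub_one_mul_add_cplβ δ s j)

theorem IsCplRow.exists_cplLast_eq (hv : IsCplRow δ s v) {c : CplIdx δ s}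
    (hc : 0 ≤ shiftedDeg (fun c => -(cplShift δ s c : ℤ)) v c) :
    ∃ j, cplLast δ s j = c ∧ shiftedDeg (fun j => -(s j : ℤ)) (v ᵥ* cplE K δ s) j =
      shiftedDeg (fun c => -(cplShift δ s c : ℤ)) v c := by
  rcases exists_eq_cplLast_or_cplDiagCol c with ⟨j, rfl⟩ | ⟨r, rfl⟩
  · refine ⟨j, rfl, (hv.shiftedDeg_cplLast fun h0 => ?_).symm⟩
    rw [shiftedDeg_of_eq_zero h0] at hc
    exact absurd hc (by simp)
  · exact absurd hc (hv.shiftedDeg_cplDiagCol_lt_zero r).not_ge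

theorem IsCplRow.rdegRow_eq (hv : IsCplRow δ s v)
    (h0 : 0 ≤ rdegRow (fun j => -(s j : ℤ)) (v ᵥ* cplE K δ s)) :
    rdegRow (fun c => -(cplShift δ s c : ℤ)) v =
      rdegRow (fun j => -(s j : ℤ)) (v ᵥ* cplE K δ s) :=
  rdegRow_eq_of_shiftedDeg_eq (WithBot.bot_lt_coe 0) h0
    (fun _ hj => hv.shiftedDeg_cplLast (hv.cplLast_ne_zero hj)) fun _ => hv.exists_cplLast_eq

theorem IsCplRow.piv_eq_cplLast (hv : IsCplRow δ s v)
    (h0 : 0 ≤ rdegRow (fun j => -(s j : ℤ)) (v ᵥ* cplE K δ s)) {j : Fin m}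
    (hj : piv (fun j => -(s j : ℤ)) (v ᵥ* cplE K δ s) = j) :
    piv (fun c => -(cplShift δ s c : ℤ)) v = cplLast δ s j :=
  piv_eq_of_shiftedDeg_eq (cplLast_strictMono δ s).monotone (WithBot.bot_lt_coe 0) h0
    (fun _ hj => hv.shiftedDeg_cplLast (hv.cplLast_ne_zero hj)) (fun _ => hv.exists_cplLast_eq) hj

end IsCplRow

theorem shiftedDeg_cplZ_cplDiagCol (r : CplRowIdx δ s) :
    shiftedDeg (fun c => -(cplShift δ s c : ℤ)) (cplZ K δ s r) (cplDiagCol δ s r) = 0 := by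
  have hdiag : cplZ K δ s r (cplDiagCol δ s r) = X ^ δ := (if_pos rfl).trans (if_pos rfl)
  rw [shiftedDeg, hdiag, degZ_X_pow, cplShift_cplDiagCol, ← WithBot.coe_add, add_neg_cancel,
    WithBot.coe_zero]

theorem shiftedDeg_cplZ_lt_zero (hδ : 0 < δ) (r : CplRowIdx δ s) {c : CplIdx δ s}
    (hc : c ≠ cplDiagCol δ s r) :
    shiftedDeg (fun c => -(cplShift δ s c : ℤ)) (cplZ K δ s r) c < 0 := by
  rw [shiftedDeg_neg_natCast_lt_zero_iff, cplZ_row]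
  by_cases hc' : c = cplSuperCol δ s r
  · subst hc'
    simp [hc, cplShift_cplSuperCol_pos hδ r]
  · simp [hc, hc']

theorem rdegRow_cplZ (hδ : 0 < δ) (r : CplRowIdx δ s) :
    rdegRow (fun c => -(cplShift δ s c : ℤ)) (cplZ K δ s r) = 0 := by
  have hr := shiftedDeg_cplZ_cplDiagCol (K := K) r
  rw [← hr]
  exact rdegRow_eq_of_forall_ne_lt fun c hc => hr ▸ shiftedDeg_cplZ_lt_zero hδ r hc

theorem piv_cplZ (hδ : 0 < δ) (r : CplRowIdx δ s) :
    piv (fun c => -(cplShift δ s c : ℤ)) (cplZ K δ s r) = cplDiagCol δ s r := by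
  have hr := shiftedDeg_cplZ_cplDiagCol (K := K) r
  exact piv_eq_of_forall_ne_lt (hr ▸ WithBot.bot_lt_coe 0)
    fun c hc => hr ▸ shiftedDeg_cplZ_lt_zero hδ r hc

theorem isUWeakPopov_cplZ (hδ : 0 < δ) :
    IsUWeakPopov (fun c => -(cplShift δ s c : ℤ)) (cplZ K δ s) := by
  refine ⟨fun r => piv_cplZ (K := K) hδ r ▸ WithBot.coe_ne_bot, fun r r' h => ?_⟩
  simp only [piv_cplZ hδ] at h
  exact (cplDiagCol_strictMono δ s).injective (WithBot.coe_injective h)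

theorem isUWeakPopov_fromRows_cplZ {ι : Type*} (hδ : 0 < δ) {P : Matrix ι (CplIdx δ s) K[X]}
    (hP : ∀ i, IsCplRow δ s (P i))
    (h0 : ∀ i, 0 ≤ rdeg (fun j => -(s j : ℤ)) (P * cplE K δ s) i)
    (hPE : IsUWeakPopov (fun j => -(s j : ℤ)) (P * cplE K δ s)) :
    IsUWeakPopov (fun c => -(cplShift δ s c : ℤ)) (fromRows P (cplZ K δ s)) := by
  choose pivot hpivot using fun i => WithBot.ne_bot_iff_exists.1 (hPE.1 i)
  have piv_P (i : ι) : piv (fun c => -(cplShift δ s c : ℤ)) (P i) = cplLast δ s (pivot i) :=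
    (hP i).piv_eq_cplLast (h0 i) (hpivot i).symm
  refine IsUWeakPopov.fromRows ⟨fun i => ?_, fun i i' h => ?_⟩ (isUWeakPopov_cplZ hδ)
    fun i r h => ?_
  · exact piv_P i ▸ WithBot.coe_ne_bot
  · simp only [piv_P] at h
    refine hPE.2 ?_
    simp only [← hpivot, (cplLast_strictMono δ s).injective (WithBot.coe_injective h)]
  · rw [piv_P, piv_cplZ hδ, WithBot.coe_inj] at h
    exact cplDiagCol_ne_cplLast r _ h.symm

theorem rdeg_fromRows_cplZ {ι : Type*} (hδ : 0 < δ) {P : Matrix ι (CplIdx δ s) K[X]}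
    (hP : ∀ i, IsCplRow δ s (P i))
    (h0 : ∀ i, 0 ≤ rdeg (fun j => -(s j : ℤ)) (P * cplE K δ s) i) :
    rdeg (fun c => -(cplShift δ s c : ℤ)) (fromRows P (cplZ K δ s)) =
      Sum.elim (rdeg (fun j => -(s j : ℤ)) (P * cplE K δ s)) 0 := by
  ext1 x
  rcases x with i | r
  exacts [(hP i).rdegRow_eq (h0 i), rdegRow_cplZ hδ r]

end PartialLinearization

theorem cpl_kernel_general {K ι κ : Type*} [Field K] {m : ℕ}
    (s : Fin m → ℕ) (δ : ℕ) (hδ : 0 < δ) (F : Matrix (Fin m) κ K[X])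
    (Kb : Matrix ι (Fin m) K[X]) (hKb : IsBasisOf Kb (leftKernel F))
    (Kbar : Matrix ι (CplIdx δ s) K[X]) (hKE : Kb = Kbar * cplE K δ s) :
    cdeg (fun c => (cplShift δ s c : ℤ)) (cplE K δ s * F) = cdeg (fun i => (s i : ℤ)) F ∧
    Submodule.map (cplE K δ s).vecMulLinear (leftKernel (cplE K δ s * F)) = leftKernel F ∧
    IsBasisOf (fromRows Kbar (cplZ K δ s)) (leftKernel (cplE K δ s * F)) ∧
    ((∀ i, 0 ≤ rdeg (fun j => -(s j : ℤ)) Kb i) → (∀ i, IsCplRow δ s (Kbar i)) →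
      rdeg (fun c => -(cplShift δ s c : ℤ)) (fromRows Kbar (cplZ K δ s)) =
          Sum.elim (rdeg (fun j => -(s j : ℤ)) Kb) 0 ∧
      (IsUWeakPopov (fun j => -(s j : ℤ)) Kb →
        IsUWeakPopov (fun c => -(cplShift δ s c : ℤ)) (fromRows Kbar (cplZ K δ s)))) := by
  subst hKE
  rw [leftKernel_mul]
  exact ⟨cdeg_cplE_mul F,
    Submodule.map_comap_eq_of_surjective vecMulLinear_cplE_surjective _,
    hKb.fromRows isBasisOf_cplZ,
    fun h0 hKbar => ⟨rdeg_fromRows_cplZ hδ hKbar h0, isUWeakPopov_fromRows_cplZ hδ hKbar h0⟩⟩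

/-- Lemma 5.6: properties of the column partial
linearization with respect to kernels: (i) `cdeg_{s̄}(EF) = cdeg_s(F)`;
(ii) `ker(EF)·E = ker(F)`; (iii) stacking any `K̄` with `K = K̄E` (for a basis
`K` of `ker F`) on top of `Z` gives a basis of `ker(EF)`; (iv) if `K̄` is the
column partial linearization of `K` and `rdeg_{−s}(K) ≥ 0`, then
`rdeg_{−s̄}(B) = (rdeg_{−s}(K), 0)` and `B` inherits the unordered weak Popov
property. -/
theorem cpl_kernel {K : Type*} [Field K] {m n k : ℕ}
    (s : Fin m → ℕ) (δ : ℕ) (hδ : 0 < δ)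
    (F : Matrix (Fin m) (Fin n) K[X])
    (Kb : Matrix (Fin k) (Fin m) K[X]) (hKb : IsBasisOf Kb (leftKernel F))
    (Kbar : Matrix (Fin k) (CplIdx δ s) K[X]) (hKE : Kb = Kbar * cplE K δ s) :
    let B : Matrix (Fin k ⊕ Lex ((j : Fin m) × Fin (cplα δ s j - 1))) (CplIdx δ s) K[X] :=
      Matrix.of (Sum.elim (fun i => Kbar i) (fun r => cplZ K δ s r))
    (∀ j, cdeg (fun c => (cplShift δ s c : ℤ)) (cplE K δ s * F) j =
        cdeg (fun i => (s i : ℤ)) F j) ∧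
    Submodule.map (cplE K δ s).vecMulLinear (leftKernel (cplE K δ s * F)) = leftKernel F ∧
    IsBasisOf B (leftKernel (cplE K δ s * F)) ∧
    ((∀ i, ((0 : ℤ) : WithBot ℤ) ≤ rdeg (fun j => -(s j : ℤ)) Kb i) →
      (∀ (r : Fin k) (c : CplIdx δ s),
        ¬(((ofLex c).2 : ℕ) = cplα δ s (ofLex c).1 - 1) →
        (Kbar r c).degree < (δ : WithBot ℕ)) →
      (∀ r, rdeg (fun c => -(cplShift δ s c : ℤ)) B r =
          Sum.elim (rdeg (fun j => -(s j : ℤ)) Kb) (fun _ => ((0 : ℤ) : WithBot ℤ)) r) ∧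
      (IsWeakPopov (fun j => -(s j : ℤ)) Kb →
        IsUWeakPopov (fun c => -(cplShift δ s c : ℤ)) B)) := by
  obtain ⟨hcdeg, hmap, hbasis, hlin⟩ := cpl_kernel_general s δ hδ F Kb hKb Kbar hKE
  exact ⟨congrFun hcdeg, hmap, hbasis, fun h0 hKbar =>
    ⟨congrFun (hlin h0 hKbar).1, fun hpopov => (hlin h0 hKbar).2 hpopov.isUWeakPopov⟩⟩
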